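/- arXiv:2603.03200 — 2 statements merged into one kernel-verified Lean document; each statement's English description precedes it below -/
import Mathlib

section
/- Let A be a countable set and X ⊆ A^ℕ a one-sided shift space which is a shift of finite order p. Let d be a metric on X inducing the product topology, and suppose there exists C ≥ 1 such that α_n ≤ C·η_{n+p} for all n ≥ 0. Then (X, σ, d) has the Lipschitz shadowing property with Lipschitz constant L = C; in fact, for every real δ with 0 < δ ≤ η_p, every δ-pseudo-orbit (x^m) admits z ∈ X with d(σ^m(z), x^m) ≤ Cδ for all m ≥ 0. -/
open scoped ENNReal

/-- The left shift on `A^ℕ`. -/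
def shiftSeq {A : Type*} (x : ℕ → A) : ℕ → A := fun n => x (n + 1)

/-- `x` and `y` agree on their first `n` coordinates, i.e. `(x,y) ∈ U_n`. -/
def BlockEq {A : Type*} (n : ℕ) (x y : ℕ → A) : Prop := ∀ k < n, x k = y k

/-- `d` is a metric on the subset `X`. -/
def IsMetricOn {Y : Type*} (X : Set Y) (d : Y → Y → ℝ) : Prop :=
  (∀ x ∈ X, ∀ y ∈ X, (d x y = 0 ↔ x = y)) ∧
  (∀ x ∈ X, ∀ y ∈ X, d x y = d y x) ∧
  (∀ x ∈ X, ∀ y ∈ X, ∀ z ∈ X, d x z ≤ d x y + d y z)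

/-- `α_n = sup { d(x,y) : (x,y) ∈ U_n }`, as an element of `[0,∞]`. -/
noncomputable def alphaN {A : Type*} (X : Set (ℕ → A))
    (d : (ℕ → A) → (ℕ → A) → ℝ) (n : ℕ) : ℝ≥0∞ :=
  sSup {t : ℝ≥0∞ | ∃ x ∈ X, ∃ y ∈ X, BlockEq n x y ∧ t = ENNReal.ofReal (d x y)}

/-- `η_n = sup { η > 0 : d(x,y) < η ⇒ (x,y) ∈ U_n }`, as an element of `[0,∞]`. -/
noncomputable def etaN {A : Type*} (X : Set (ℕ → A))
    (d : (ℕ → A) → (ℕ → A) → ℝ) (n : ℕ) : ℝ≥0∞ :=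
  sSup {t : ℝ≥0∞ | ∃ η : ℝ, 0 < η ∧
    (∀ x ∈ X, ∀ y ∈ X, d x y < η → BlockEq n x y) ∧ t = ENNReal.ofReal η}

/-- `d` induces the product topology on `X` (the alphabet being discrete, the
cylinders `{y : y agrees with x on the first m coordinates}` form a neighborhood
basis at each point for the product topology). -/
def InducesProductTopologyOn {A : Type*} (X : Set (ℕ → A))
    (d : (ℕ → A) → (ℕ → A) → ℝ) : Prop :=
  (∀ x ∈ X, ∀ ε > (0:ℝ), ∃ m : ℕ, ∀ y ∈ X, BlockEq m x y → d x y < ε) ∧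
  (∀ x ∈ X, ∀ m : ℕ, ∃ ε > (0:ℝ), ∀ y ∈ X, d x y < ε → BlockEq m x y)

/-- A `δ`-pseudo-orbit lying in `X` for the map `σ`, with respect to `d`. -/
def IsPseudoOrbitOn {Y : Type*} (d : Y → Y → ℝ) (σ : Y → Y) (X : Set Y)
    (δ : ℝ) (xs : ℕ → Y) : Prop :=
  ∀ n : ℕ, xs n ∈ X ∧ d (σ (xs n)) (xs (n + 1)) < δ

/-- `X` is a shift of finite order `p`. -/
def IsShiftOfOrder {A : Type*} (X : Set (ℕ → A)) (p : ℕ) : Prop :=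
  ∀ x : ℕ → A,
    (∀ i : ℕ, ∃ y ∈ X, ∃ j : ℕ, ∀ t < p, x (i + t) = y (j + t)) → x ∈ X

/-!
The shadowing point of a pseudo-orbit `x⁰, x¹, …` is the sequence `z` of initial letters `x^m_0`.
If `δ ≤ η_n`, consecutive terms satisfy `x^m_{k+1} = x^{m+1}_k` for `k < n`, so `x^m` and `σ^m z`
agree on `n + 1` letters. For `n = p` this puts `z` into `X`. If `δ ≤ η_{n+p}` holds for all `n`,
then `σ^m z = x^m`; otherwise some `n` has `η_{n+1+p} < δ ≤ η_{n+p}`, and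
`d(σ^m z, x^m) ≤ α_{n+1} ≤ C η_{n+1+p} ≤ C δ`. Small `δ` are
admissible because `η_p = 0` would force `α_0 = 0`, so `X` would have at most one point and
`η_p = ∞`.
-/

section Shadowing

variable {A : Type*} {X : Set (ℕ → A)} {d : (ℕ → A) → (ℕ → A) → ℝ} {n p : ℕ} {x y : ℕ → A}
  {δ : ℝ} {xs : ℕ → ℕ → A}

theorem iterate_shiftSeq_apply (m k : ℕ) (x : ℕ → A) : shiftSeq^[m] x k = x (m + k) := by
  induction m generalizing x with
  | zero => rw [Function.iterate_zero_apply, Nat.zero_add]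
  | succ m ih => rw [Function.iterate_succ_apply, ih, shiftSeq, Nat.add_right_comm]

theorem BlockEq.mono {m : ℕ} (hmn : m ≤ n) (h : BlockEq n x y) : BlockEq m x y :=
  fun k hk => h k (hk.trans_le hmn)

theorem eq_of_forall_blockEq_succ (h : ∀ n, BlockEq (n + 1) x y) : x = y :=
  funext fun k => h k k k.lt_succ_self

theorem IsShiftOfOrder.mapsTo_shiftSeq (hX : IsShiftOfOrder X p) : Set.MapsTo shiftSeq X X :=
  fun x hx => hX _ fun i => ⟨x, hx, i + 1, fun t _ => by rw [shiftSeq, Nat.add_right_comm]⟩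

/-- The sequence of initial letters of a sequence of points of `A^ℕ`. It is the candidate for a
point whose orbit shadows `xs`. -/
def initialLetters (xs : ℕ → ℕ → A) : ℕ → A := fun m => xs m 0

theorem blockEq_iterate_shiftSeq_initialLetters
    (h : ∀ m, BlockEq n (shiftSeq (xs m)) (xs (m + 1))) (m : ℕ) :
    BlockEq (n + 1) (shiftSeq^[m] (initialLetters xs)) (xs m) := by
  intro k hk
  rw [iterate_shiftSeq_apply]
  induction k generalizing m with
  | zero => rfl
  | succ k ih =>
    calc initialLetters xs (m + (k + 1))
        = initialLetters xs (m + 1 + k) := by rw [Nat.add_right_comm, Nat.add_assoc]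
      _ = xs (m + 1) k := ih (m + 1) (by lia)
      _ = xs m (k + 1) := (h m k (by lia)).symm

theorem IsShiftOfOrder.initialLetters_mem (hX : IsShiftOfOrder X p)
    (hxs : ∀ m, xs m ∈ X) (h : ∀ m, BlockEq p (shiftSeq^[m] (initialLetters xs)) (xs m)) :
    initialLetters xs ∈ X :=
  hX _ fun i => ⟨xs i, hxs i, 0, fun t ht => by
    rw [Nat.zero_add, ← h i t ht, iterate_shiftSeq_apply]⟩

theorem ofReal_le_alphaN (hx : x ∈ X) (hy : y ∈ X) (h : BlockEq n x y) :
    ENNReal.ofReal (d x y) ≤ alphaN X d n :=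
  le_sSup ⟨x, hx, y, hy, h, rfl⟩

theorem ofReal_le_etaN {η : ℝ} (hη : 0 < η)
    (h : ∀ x ∈ X, ∀ y ∈ X, d x y < η → BlockEq n x y) : ENNReal.ofReal η ≤ etaN X d n :=
  le_sSup ⟨η, hη, h, rfl⟩

theorem blockEq_of_ofReal_lt_etaN (hx : x ∈ X) (hy : y ∈ X)
    (h : ENNReal.ofReal (d x y) < etaN X d n) : BlockEq n x y := by
  obtain ⟨_, ⟨η, hη, hblock, rfl⟩, hlt⟩ := lt_sSup_iff.1 h
  exact hblock x hx y hy ((ENNReal.ofReal_lt_ofReal_iff hη).1 hlt)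

theorem le_mul_of_blockEq_of_etaN_le {C : ℝ} {k : ℕ} (hC : 0 ≤ C) (hδ : 0 ≤ δ)
    (hα : alphaN X d n ≤ ENNReal.ofReal C * etaN X d k)
    (hη : etaN X d k ≤ ENNReal.ofReal δ) (hx : x ∈ X) (hy : y ∈ X)
    (h : BlockEq n x y) : d x y ≤ C * δ := by
  refine (ENNReal.ofReal_le_ofReal_iff (mul_nonneg hC hδ)).1 ?_
  calc ENNReal.ofReal (d x y)
      ≤ alphaN X d n := ofReal_le_alphaN hx hy h
    _ ≤ ENNReal.ofReal C * etaN X d k := hα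
    _ ≤ ENNReal.ofReal C * ENNReal.ofReal δ := by gcongr
    _ = ENNReal.ofReal (C * δ) := (ENNReal.ofReal_mul hC).symm

theorem IsMetricOn.nonneg {Y : Type*} {S : Set Y} {dist : Y → Y → ℝ} (h : IsMetricOn S dist)
    {a b : Y} (ha : a ∈ S) (hb : b ∈ S) : 0 ≤ dist a b := by
  obtain ⟨eq_iff, symm, triangle⟩ := h
  linarith [triangle a ha b hb a ha, symm a ha b hb, (eq_iff a ha a ha).2 rfl]

theorem IsMetricOn.subsingleton_of_alphaN_zero_eq_zero (hd : IsMetricOn X d)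
    (h : alphaN X d 0 = 0) : X.Subsingleton := by
  intro x hx y hy
  have hle : ENNReal.ofReal (d x y) ≤ 0 :=
    h ▸ ofReal_le_alphaN hx hy fun k hk => absurd hk k.not_lt_zero
  have hdist : d x y ≤ 0 := ENNReal.ofReal_eq_zero.1 (nonpos_iff_eq_zero.1 hle)
  exact (hd.1 x hx y hy).1 (hdist.antisymm (hd.nonneg hx hy))

theorem IsMetricOn.etaN_pos (hd : IsMetricOn X d) {c : ℝ≥0∞}
    (h : alphaN X d 0 ≤ c * etaN X d n) : 0 < etaN X d n := by
  by_contra hη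
  have hη_zero : etaN X d n = 0 := nonpos_iff_eq_zero.1 (not_lt.1 hη)
  have hα_zero : alphaN X d 0 = 0 := by simpa only [hη_zero, mul_zero, nonpos_iff_eq_zero] using h
  have hX : X.Subsingleton := hd.subsingleton_of_alphaN_zero_eq_zero hα_zero
  have hone : ENNReal.ofReal 1 ≤ etaN X d n :=
    ofReal_le_etaN one_pos fun x hx y hy _ k _ => congrFun (hX hx hy) k
  exact hη ((ENNReal.ofReal_pos.2 one_pos).trans_le hone)

theorem IsPseudoOrbitOn.blockEq_initialLetters
    (hxs : IsPseudoOrbitOn d shiftSeq X δ xs) (hX : Set.MapsTo shiftSeq X X) (hδ : 0 < δ)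
    (hη : ENNReal.ofReal δ ≤ etaN X d n) (m : ℕ) :
    BlockEq (n + 1) (shiftSeq^[m] (initialLetters xs)) (xs m) :=
  blockEq_iterate_shiftSeq_initialLetters (fun i =>
    blockEq_of_ofReal_lt_etaN (hX (hxs i).1) (hxs (i + 1)).1
      (((ENNReal.ofReal_lt_ofReal_iff hδ).2 (hxs i).2).trans_le hη)) m

theorem IsPseudoOrbitOn.exists_shadowing {C : ℝ} (hxs : IsPseudoOrbitOn d shiftSeq X δ xs)
    (hX : IsShiftOfOrder X p) (hd : IsMetricOn X d) (hC : 0 ≤ C)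
    (hα : ∀ n, alphaN X d n ≤ ENNReal.ofReal C * etaN X d (n + p))
    (hδ : 0 < δ) (hη : ENNReal.ofReal δ ≤ etaN X d p) :
    ∃ z ∈ X, ∀ m, d (shiftSeq^[m] z) (xs m) ≤ C * δ := by
  have hagree {n : ℕ} (hn : ENNReal.ofReal δ ≤ etaN X d (n + p)) (m : ℕ) :
      BlockEq (n + 1) (shiftSeq^[m] (initialLetters xs)) (xs m) :=
    (hxs.blockEq_initialLetters hX.mapsTo_shiftSeq hδ hn m).mono (by lia)
  have hz : initialLetters xs ∈ X := hX.initialLetters_mem (fun m => (hxs m).1) fun m =>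
    (hxs.blockEq_initialLetters hX.mapsTo_shiftSeq hδ hη m).mono p.le_succ
  have horbit (m : ℕ) : shiftSeq^[m] (initialLetters xs) ∈ X := hX.mapsTo_shiftSeq.iterate m hz
  refine ⟨initialLetters xs, hz, fun m => ?_⟩
  by_cases hstep : ∀ n, ENNReal.ofReal δ ≤ etaN X d (n + p) →
      ENNReal.ofReal δ ≤ etaN X d (n + 1 + p)
  · have hall (n : ℕ) : ENNReal.ofReal δ ≤ etaN X d (n + p) :=
      Nat.rec (by rwa [Nat.zero_add]) hstep n
    have heq : shiftSeq^[m] (initialLetters xs) = xs m :=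
      eq_of_forall_blockEq_succ fun n => hagree (hall n) m
    rw [(hd.1 _ (horbit m) _ (hxs m).1).2 heq]
    positivity
  · push Not at hstep
    obtain ⟨n, hle, hlt⟩ := hstep
    exact le_mul_of_blockEq_of_etaN_le hC hδ.le (hα (n + 1)) hlt.le (horbit m) (hxs m).1
      (hagree hle m)

end Shadowing

theorem lipschitz_shadowing_of_alpha_le_eta_general {A : Type*} {X : Set (ℕ → A)} {p : ℕ}
    (hX : IsShiftOfOrder X p) {d : (ℕ → A) → (ℕ → A) → ℝ} (hd : IsMetricOn X d)
    {C : ℝ} (hC : 0 ≤ C)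
    (hα : ∀ n : ℕ, alphaN X d n ≤ ENNReal.ofReal C * etaN X d (n + p)) :
    (∀ δ : ℝ, 0 < δ → ENNReal.ofReal δ ≤ etaN X d p →
      ∀ xs : ℕ → (ℕ → A), IsPseudoOrbitOn d shiftSeq X δ xs →
        ∃ z ∈ X, ∀ m : ℕ, d (shiftSeq^[m] z) (xs m) ≤ C * δ) ∧
    (∃ δ₀ > (0:ℝ), ∀ δ : ℝ, 0 < δ → δ ≤ δ₀ →
      ∀ xs : ℕ → (ℕ → A), IsPseudoOrbitOn d shiftSeq X δ xs →
        ∃ z ∈ X, ∀ m : ℕ, d (shiftSeq^[m] z) (xs m) ≤ C * δ) := by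
  have hη_pos : 0 < etaN X d p := hd.etaN_pos (by simpa only [Nat.zero_add] using hα 0)
  obtain ⟨δ₀, -, hδ₀_pos, hδ₀_lt⟩ := ENNReal.lt_iff_exists_real_btwn.1 hη_pos
  exact ⟨fun δ hδ hη xs hxs => hxs.exists_shadowing hX hd hC hα hδ hη,
    δ₀, ENNReal.ofReal_pos.1 hδ₀_pos, fun δ hδ hle xs hxs =>
      hxs.exists_shadowing hX hd hC hα hδ ((ENNReal.ofReal_le_ofReal hle).trans hδ₀_lt.le)⟩

/-- If `X` is a shift of finite order `p` and the compatible metric `d` satisfies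
`α_n ≤ C·η_{n+p}` for all `n`, then `(X,σ,d)` has Lipschitz shadowing with
constant `L = C`; in fact every `δ`-pseudo-orbit with `0 < δ ≤ η_p` is
`Cδ`-shadowed. -/
theorem lipschitz_shadowing_of_alpha_le_eta {A : Type*} [Countable A]
    (X : Set (ℕ → A)) (hne : X.Nonempty)
    (hcl : @IsClosed (ℕ → A) (@Pi.topologicalSpace ℕ (fun _ => A) (fun _ => ⊥)) X)
    (hinv : ∀ x ∈ X, shiftSeq x ∈ X)
    (p : ℕ) (hp : 1 ≤ p) (horder : IsShiftOfOrder X p)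
    (d : (ℕ → A) → (ℕ → A) → ℝ)
    (hmet : IsMetricOn X d) (htop : InducesProductTopologyOn X d)
    (C : ℝ) (hC : 1 ≤ C)
    (hcond : ∀ n : ℕ, alphaN X d n ≤ ENNReal.ofReal C * etaN X d (n + p)) :
    (∀ δ : ℝ, 0 < δ → ENNReal.ofReal δ ≤ etaN X d p →
      ∀ xs : ℕ → (ℕ → A), IsPseudoOrbitOn d shiftSeq X δ xs →
        ∃ z ∈ X, ∀ m : ℕ, d (shiftSeq^[m] z) (xs m) ≤ C * δ) ∧
    (∃ δ₀ > (0:ℝ), ∀ δ : ℝ, 0 < δ → δ ≤ δ₀ →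
      ∀ xs : ℕ → (ℕ → A), IsPseudoOrbitOn d shiftSeq X δ xs →
        ∃ z ∈ X, ∀ m : ℕ, d (shiftSeq^[m] z) (xs m) ≤ C * δ) := by
  exact lipschitz_shadowing_of_alpha_le_eta_general horder hmet (zero_le_one.trans hC) hcond
end

section
/- Let A be a countably infinite set. If P and Q are two enumerations of Σ_A^fin, then the OTW metrics d_P and d_Q on Σ_A are uniformly equivalent: both identity maps id : (Σ_A, d_P) → (Σ_A, d_Q) and id : (Σ_A, d_Q) → (Σ_A, d_P) are uniformly continuous. -/
/-- The Ott–Tomforde–Willis full shift `Σ_A = A^ℕ ⊔ Σ_A^fin`: infinite words are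
functions `ℕ → A`, finite words (including the empty word `[]`) are lists. -/
abbrev OTWFullShift (A : Type*) := (ℕ → A) ⊕ List A

/-- `u ⪯ x`: the finite word `u` is an initial segment of `x ∈ Σ_A`. -/
def OTWPre {A : Type*} (u : List A) : OTWFullShift A → Prop
  | Sum.inl f => ∀ i : Fin u.length, u.get i = f i
  | Sum.inr v => u <+: v

/-- The shift map on `Σ_A`: delete the first symbol (finite words of length `≤ 1`
are sent to the empty word). -/
def otwShift {A : Type*} : OTWFullShift A → OTWFullShift A
  | Sum.inl f => Sum.inl fun n => f (n + 1)
  | Sum.inr v => Sum.inr v.tail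

/-- The Deaconu–Renault domain `D = Σ_A ∖ {∅}`. -/
def otwDomain (A : Type*) : Set (OTWFullShift A) := {x | x ≠ Sum.inr []}

/-- `P` is an enumeration of `Σ_A^fin` indexed by `{1, 2, 3, …}`:
`j ↦ P j` is a bijection from `{1, 2, …}` onto the finite words
(the value `P 0` is irrelevant). -/
def IsEnumeration {A : Type*} (P : ℕ → List A) : Prop :=
  Function.Bijective fun k : ℕ => P (k + 1)

open Classical in
/-- The OTW metric attached to the enumeration `P`:
`d_P(x,y) = 2^{-i}` where `i = min{j ≥ 1 : exactly one of P j ⪯ x, P j ⪯ y}`. -/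
noncomputable def otwDist {A : Type*} (P : ℕ → List A) (x y : OTWFullShift A) : ℝ :=
  if x = y then 0
  else (1 / 2 : ℝ) ^ sInf {j : ℕ | 1 ≤ j ∧ Xor' (OTWPre (P j) x) (OTWPre (P j) y)}

/-!
The condition `d_P(x, y) < 2⁻ⁿ` says exactly that `x` and `y` have the same initial segments among
`p₁, …, pₙ`. Every finite set of words lies in `{p₁, …, pₘ}` for large `m`, so `d_P(x, y) < 2⁻ᵐ`
forces agreement on `q₁, …, qₙ`, that is, `d_Q(x, y) < 2⁻ⁿ`.
-/

theorem exists_subset_image_Iio_of_finite {α : Type*} {p : ℕ → α} (hp : p.Surjective) {s : Set α}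
    (hs : s.Finite) : ∃ n, s ⊆ p '' Set.Iio n := by
  obtain ⟨b, hb⟩ := (hs.image (Function.surjInv hp)).bddAbove
  exact ⟨b + 1, fun a ha ↦ ⟨Function.surjInv hp a,
    Nat.lt_succ_of_le (hb (Set.mem_image_of_mem _ ha)), Function.surjInv_eq hp a⟩⟩

section OTW

variable {A : Type*} {x y : OTWFullShift A}

theorem otwPre_ofFn_inl_iff {f g : ℕ → A} {n : ℕ} :
    OTWPre (List.ofFn fun i : Fin n ↦ f i) (Sum.inl g) ↔ ∀ i < n, f i = g i := by
  simp [OTWPre, Fin.forall_iff]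

theorem not_forall_otwPre_inl_iff_inr (f : ℕ → A) (v : List A) :
    ¬ ∀ u, OTWPre u (Sum.inl f) ↔ OTWPre u (Sum.inr v) := by
  intro h
  have h_prefix : (List.ofFn fun i : Fin (v.length + 1) ↦ f i) <+: v :=
    (h _).mp (otwPre_ofFn_inl_iff.mpr fun _ _ ↦ rfl)
  simpa using h_prefix.length_le

theorem eq_of_forall_otwPre_iff (h : ∀ u, OTWPre u x ↔ OTWPre u y) : x = y := by
  rcases x with f | v <;> rcases y with g | w
  · have h_eq (n : ℕ) : f n = g n :=
      otwPre_ofFn_inl_iff.mp ((h _).mp (otwPre_ofFn_inl_iff.mpr fun _ _ ↦ rfl)) n n.lt_succ_self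
    exact congrArg Sum.inl (funext h_eq)
  · exact (not_forall_otwPre_inl_iff_inr f w h).elim
  · exact (not_forall_otwPre_inl_iff_inr g v fun u ↦ (h u).symm).elim
  · have hvw : v <+: w := (h v).mp List.prefix_rfl
    have hwv : w <+: v := (h w).mpr List.prefix_rfl
    exact congrArg Sum.inr (hvw.eq_of_length_le hwv.length_le)

theorem otwPre_iff_of_otwDist_lt {P : ℕ → List A} {n k : ℕ} (hxy : otwDist P x y < (1 / 2) ^ n)
    (hk : k < n) : OTWPre (P (k + 1)) x ↔ OTWPre (P (k + 1)) y := by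
  rw [otwDist] at hxy
  split_ifs at hxy with h_eq
  · rw [h_eq]
  · have hn := (pow_lt_pow_iff_right_of_lt_one₀ one_half_pos one_half_lt_one).mp hxy
    by_contra h_iff
    exact Nat.notMem_of_lt_sInf ((Nat.succ_le_of_lt hk).trans_lt hn)
      ⟨k.succ_pos, (xor_iff_not_iff _ _).mpr h_iff⟩

theorem otwDist_lt_of_forall_otwPre_iff {P : ℕ → List A}
    (hP : Function.Surjective fun k ↦ P (k + 1)) {n : ℕ}
    (h : ∀ k < n, OTWPre (P (k + 1)) x ↔ OTWPre (P (k + 1)) y) :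
    otwDist P x y < (1 / 2) ^ n := by
  rw [otwDist]
  split_ifs with h_eq
  · positivity
  · obtain ⟨k, hk⟩ : ∃ k, ¬(OTWPre (P (k + 1)) x ↔ OTWPre (P (k + 1)) y) := by
      by_contra! h_iff
      exact h_eq (eq_of_forall_otwPre_iff (hP.forall.mpr h_iff))
    refine pow_lt_pow_right_of_lt_one₀ one_half_pos one_half_lt_one (Nat.lt_of_succ_le ?_)
    refine le_csInf ⟨k + 1, k.succ_pos, (xor_iff_not_iff _ _).mpr hk⟩ ?_
    rintro (_ | j) ⟨hj, h_xor⟩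
    · exact (Nat.not_succ_le_zero 0 hj).elim
    · by_contra! h_lt
      exact (xor_iff_not_iff _ _).mp h_xor (h j (by lia))

theorem exists_forall_otwDist_lt_of_otwDist_lt {P Q : ℕ → List A}
    (hP : Function.Surjective fun k ↦ P (k + 1)) (hQ : Function.Surjective fun k ↦ Q (k + 1))
    {ε : ℝ} (hε : 0 < ε) :
    ∃ δ > (0 : ℝ), ∀ x y : OTWFullShift A, otwDist P x y < δ → otwDist Q x y < ε := by
  obtain ⟨n, hn⟩ := exists_pow_lt_of_lt_one hε one_half_lt_one
  obtain ⟨m, hm⟩ := exists_subset_image_Iio_of_finite hP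
    ((Set.finite_Iio n).image fun k ↦ Q (k + 1))
  refine ⟨(1 / 2) ^ m, by positivity, fun x y hxy ↦
    (otwDist_lt_of_forall_otwPre_iff hQ fun k hk ↦ ?_).trans hn⟩
  obtain ⟨l, hl, hlk : P (l + 1) = Q (k + 1)⟩ := hm (Set.mem_image_of_mem _ hk)
  exact hlk ▸ otwPre_iff_of_otwDist_lt hxy hl

end OTW

theorem otwDist_uniformly_equivalent_general {A : Type*} (P Q : ℕ → List A)
    (hP : Function.Surjective fun k ↦ P (k + 1)) (hQ : Function.Surjective fun k ↦ Q (k + 1)) :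
    (∀ ε > (0 : ℝ), ∃ δ > (0 : ℝ), ∀ x y : OTWFullShift A,
      otwDist P x y < δ → otwDist Q x y < ε) ∧
    (∀ ε > (0 : ℝ), ∃ δ > (0 : ℝ), ∀ x y : OTWFullShift A,
      otwDist Q x y < δ → otwDist P x y < ε) :=
  ⟨fun _ hε ↦ exists_forall_otwDist_lt_of_otwDist_lt hP hQ hε,
    fun _ hε ↦ exists_forall_otwDist_lt_of_otwDist_lt hQ hP hε⟩

/-- The OTW metrics attached to any two enumerations are uniformly equivalent:
both identity maps are uniformly continuous. -/
theorem otwDist_uniformly_equivalent {A : Type*} [Countable A] [Infinite A]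
    (P Q : ℕ → List A) (hP : IsEnumeration P) (hQ : IsEnumeration Q) :
    (∀ ε > (0:ℝ), ∃ δ > (0:ℝ), ∀ x y : OTWFullShift A,
      otwDist P x y < δ → otwDist Q x y < ε) ∧
    (∀ ε > (0:ℝ), ∃ δ > (0:ℝ), ∀ x y : OTWFullShift A,
      otwDist Q x y < δ → otwDist P x y < ε) := by
  exact otwDist_uniformly_equivalent_general P Q hP.surjective hQ.surjective
end
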